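/- Let α ∈ ℂ and let F = (f_1, f_2) be a multigerm in ℂ^n (n ≥ 3) whose 5-jet equals ((t², t³, 0, …, 0), (t⁵, t⁴ + αt⁵, t³, 0, …, 0)). Then F is not simple. -/

import Mathlib

/-!
The coefficient `α` of the family is a modulus: its seventh power is an invariant of
`A`-equivalence.

Suppose `g ∘ G = G' ∘ h`, where `G`, `G'` have the given `5`-jets with parameters `α`, `β`, and
let `L` be the linear part of `g`. The second components have order `3`, so modulo `t⁶` only `L`
contributes to the left-hand side; on the first components, of order `2`, this holds modulo `t⁴`.
Write `h₁ = a t + …`, `h₂ = b t + b' t² + …` and `e₀, e₁, …` for the standard basis. The first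
components give `L e₀ = a² e₀` and show that `L e₁` has `e₁`-coordinate `a³` and no
`e₂`-coordinate; the second ones give `L e₁ = b⁴ e₁ + 3 b² b' e₂` and a formula for
`L (e₀ + α e₁)`. Hence `b' = 0`, `a³ = b⁴`, `a² = b⁵` and `α = b β`, so that `b⁷ = 1` and
`α⁷ = β⁷`.

Adding `ε t⁵` to the second coordinate of the second component of `F` changes `α` to `α + ε`. The
result is still a multigerm, since the `5`-jet alone forces the two branches to meet only at the
origin. So the line `F + ε (0, t⁵ e₁)` meets every `A`-class in finitely many points, while each
neighbourhood of a jet of `F` contains its members for all small `ε`.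
-/

open scoped Topology

namespace CurveSing

/-- Pad a curve in `ℂ^d` to a curve in `ℂ^n` by appending zero coordinates. -/
def pad (d n : ℕ) (f : ℂ → Fin d → ℂ) : ℂ → Fin n → ℂ :=
  fun t j => if hj : (j : ℕ) < d then f t ⟨(j : ℕ), hj⟩ else 0

/-- The curve `t ↦ (0,…,0,t,0,…,0)` (the `i`-th coordinate axis of `ℂ^n`). -/
def axis (n i : ℕ) : ℂ → Fin n → ℂ := fun t j => if (j : ℕ) = i then t else 0

/-- The multigerm consisting of the `n` coordinate axes of `ℂ^n`. -/
def Gn (n : ℕ) : Fin n → ℂ → Fin n → ℂ := fun i => axis n (i : ℕ)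

/-- A (representative of a) curve germ in `ℂ^n`. -/
def IsCurveGerm (n : ℕ) (f : ℂ → Fin n → ℂ) : Prop :=
  AnalyticAt ℂ f 0 ∧ f 0 = 0

/-- A multigerm with `k` components in `ℂ^n`: each component is a curve germ and the
images of sufficiently small representatives of distinct components meet only at `0`. -/
def IsMultigerm (n k : ℕ) (F : Fin k → ℂ → Fin n → ℂ) : Prop :=
  (∀ i, IsCurveGerm n (F i)) ∧
  ∃ ε > (0 : ℝ), ∀ i j : Fin k, i ≠ j → ∀ s t : ℂ,
    ‖s‖ < ε → ‖t‖ < ε → F i s = F j t → F i s = 0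

/-- A germ of a biholomorphism `(E,0) → (E,0)`. -/
def IsBiholoGerm {E : Type*} [NormedAddCommGroup E] [NormedSpace ℂ E] (g : E → E) : Prop :=
  AnalyticAt ℂ g 0 ∧ g 0 = 0 ∧
  ∃ g' : E → E, AnalyticAt ℂ g' 0 ∧ g' 0 = 0 ∧
    (∀ᶠ x in 𝓝 (0 : E), g' (g x) = x) ∧ (∀ᶠ x in 𝓝 (0 : E), g (g' x) = x)

/-- `A`-equivalence of multigerms with `k` components in `ℂ^n`. -/
def AEquiv (n k : ℕ) (F F' : Fin k → ℂ → Fin n → ℂ) : Prop :=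
  ∃ g : (Fin n → ℂ) → Fin n → ℂ, IsBiholoGerm g ∧
    ∃ h : Fin k → ℂ → ℂ, (∀ i, IsBiholoGerm (h i)) ∧
      ∀ i, (fun t => g (F i t)) =ᶠ[𝓝 (0 : ℂ)] fun t => F' i (h i t)

/-- Stable `A`-equivalence: the two multigerms become `A`-equivalent after the standard
inclusions into a common `ℂ^N`. -/
def StablyAEquiv (n n' k : ℕ) (F : Fin k → ℂ → Fin n → ℂ)
    (F' : Fin k → ℂ → Fin n' → ℂ) : Prop :=
  ∃ N, n ≤ N ∧ n' ≤ N ∧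
    AEquiv N k (fun i => pad n N (F i)) (fun i => pad n' N (F' i))

/-- The `m`-jet of a curve, recorded as the tuple of iterated derivatives at `0`
of orders `0,…,m` (this determines and is determined by the degree-`m` Taylor
polynomial at `0`). -/
noncomputable def jet (n m : ℕ) (f : ℂ → Fin n → ℂ) : Fin (m + 1) → Fin n → ℂ :=
  fun i => iteratedDeriv (i : ℕ) f 0

/-- The `m`-jet of a multigerm. -/
noncomputable def jetF (n k m : ℕ) (F : Fin k → ℂ → Fin n → ℂ) : Fin k → Fin (m + 1) → Fin n → ℂ :=
  fun i => jet n m (F i)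

/-- A multigerm is simple if some neighbourhood of one of its jets meets only finitely
many `A`-equivalence classes of multigerms. -/
def Simple (n k : ℕ) (F : Fin k → ℂ → Fin n → ℂ) : Prop :=
  ∃ m : ℕ, ∃ U : Set (Fin k → Fin (m + 1) → Fin n → ℂ), IsOpen U ∧ jetF n k m F ∈ U ∧
    ∃ (N : ℕ) (R : Fin N → Fin k → ℂ → Fin n → ℂ),
      ∀ G : Fin k → ℂ → Fin n → ℂ, IsMultigerm n k G → jetF n k m G ∈ U →
        ∃ i, AEquiv n k G (R i)

/-- A curve germ is regular if its derivative at `0` does not vanish. -/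
def IsRegular (n : ℕ) (f : ℂ → Fin n → ℂ) : Prop := deriv f 0 ≠ 0

/-- `F` is stably `A`-equivalent to the pair with first component the regular curve
`(t,0,…,0)` and second component `g` (a curve in `ℂ^{d'}`). -/
def PairNF (d : ℕ) (F : Fin 2 → ℂ → Fin d → ℂ) (d' : ℕ) (g : ℂ → Fin d' → ℂ) : Prop :=
  StablyAEquiv d d' 2 F ![axis d' 0, g]

end CurveSing

namespace CurveSing

open Asymptotics Filter

/-! ### Congruence of germs modulo powers of `t` -/

section EqMod

variable {E E' : Type*} [NormedAddCommGroup E] [NormedAddCommGroup E']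

/-- Congruence `f ≡ g mod t ^ N` of germs at `0`, for not necessarily analytic functions; in
particular `EqMod N f 0` says that `f` has order at least `N`. -/
def EqMod (N : ℕ) (f g : ℂ → E) : Prop :=
  (fun t => f t - g t) =O[𝓝 0] fun t : ℂ => t ^ N

namespace EqMod

variable {M N : ℕ} {f f' g g' k : ℂ → E}

theorem zero_right : EqMod N f 0 ↔ f =O[𝓝 0] fun t : ℂ => t ^ N := by
  simp [EqMod]

theorem of_eventuallyEq (h : f =ᶠ[𝓝 0] g) : EqMod N f g :=
  (isBigO_zero _ _).congr' (h.mono fun t ht => by simp [ht]) .rfl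

theorem symm (h : EqMod N f g) : EqMod N g f := by
  simpa [EqMod] using h.neg_left

theorem trans (h : EqMod N f g) (h' : EqMod N g k) : EqMod N f k := by
  simpa [EqMod] using h.add h'

theorem add (h : EqMod N f g) (h' : EqMod N f' g') : EqMod N (f + f') (g + g') :=
  (IsBigO.add h h').congr_left fun _ => (add_sub_add_comm ..).symm

theorem mono (h : EqMod M f g) (hNM : N ≤ M) : EqMod N f g := by
  obtain ⟨j, rfl⟩ := Nat.exists_eq_add_of_le hNM
  have h_one : (fun t : ℂ => t ^ j) =O[𝓝 0] fun _ => (1 : ℂ) :=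
    (continuous_pow j).continuousAt.isBigO_one ℂ
  exact IsBigO.trans h <| by
    simpa [pow_add] using (isBigO_refl (fun t : ℂ => t ^ N) (𝓝 0)).mul h_one

theorem tendsto_zero (h : EqMod 1 f 0) : Tendsto f (𝓝 0) (𝓝 0) :=
  (zero_right.1 h).trans_tendsto (by simpa using (continuous_pow (M := ℂ) 1).tendsto 0)

theorem apply_zero (h : EqMod N f 0) (hN : N ≠ 0) : f 0 = 0 :=
  (zero_right.1 h).eq_zero_imp.self_of_nhds (zero_pow hN)

theorem comp (h : EqMod N f g) {s : ℂ → ℂ} (hs : EqMod 1 s 0) :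
    EqMod N (fun t => f (s t)) fun t => g (s t) := by
  have hs' : s =O[𝓝 0] fun t : ℂ => t := by simpa using zero_right.1 hs
  exact (IsBigO.comp_tendsto h hs.tendsto_zero).trans (hs'.pow N)

theorem isEquivalent_pow {a : ℂ → ℂ} (h : EqMod (N + 1) a fun t => t ^ N) :
    a ~[𝓝 0] fun t => t ^ N :=
  h.trans_isLittleO (isLittleO_pow_pow N.lt_succ_self)

theorem mul {a a' b b' : ℂ → ℂ} {p q : ℕ} (h : EqMod M a a') (h' : EqMod N b b')
    (ha' : EqMod p a' 0) (hb : EqMod q b 0) {K : ℕ} (hM : K ≤ M + q) (hN : K ≤ p + N) :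
    EqMod K (a * b) (a' * b') := by
  have left : EqMod K (a * b) (a' * b) :=
    mono (M := M + q) (by simpa [EqMod, sub_mul, pow_add] using IsBigO.mul h (zero_right.1 hb)) hM
  have right : EqMod K (a' * b) (a' * b') :=
    mono (M := p + N) (by simpa [EqMod, mul_sub, pow_add] using (zero_right.1 ha').mul h') hN
  exact left.trans right

variable [NormedSpace ℂ E] [NormedSpace ℂ E']

theorem add_pow_smul (N : ℕ) (f : ℂ → E) {q : ℂ → E} (hq : ContinuousAt q 0) :
    EqMod N (fun t => f t + t ^ N • q t) f := by
  simpa [EqMod] using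
    (isBigO_refl (fun t : ℂ => t ^ N) (𝓝 0)).smul (hq.tendsto.isBigO_one ℂ)

theorem pow_smul (N : ℕ) {q : ℂ → E} (hq : ContinuousAt q 0) :
    EqMod N (fun t => t ^ N • q t) 0 := by
  simpa using add_pow_smul N 0 hq

theorem smul_const {a b : ℂ → ℂ} (h : EqMod N a b) (x : E) :
    EqMod N (fun t => a t • x) fun t => b t • x := by
  simpa [EqMod, sub_smul] using IsBigO.smul h (isBigO_const_one ℂ x (𝓝 0))

theorem clm_comp (h : EqMod N f g) (L : E →L[ℂ] E') :
    EqMod N (fun t => L (f t)) fun t => L (g t) := by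
  simpa [EqMod] using (L.isBigO_comp (fun t => f t - g t) (𝓝 0)).trans h

theorem apply {ι : Type*} [Fintype ι] {f g : ℂ → ι → ℂ} (h : EqMod N f g) (i : ι) :
    EqMod N (fun t => f t i) fun t => g t i :=
  h.clm_comp (.proj i)

theorem eq_zero_of_pow_smul {c : E} (h : EqMod (N + 1) (fun t => t ^ N • c) 0) : c = 0 := by
  by_contra hc
  have h_pow : (fun t : ℂ => t ^ N) =O[𝓝 0] fun t : ℂ => t ^ (N + 1) := by
    simpa [isBigO_iff, norm_smul, hc] using
      ((isBigO_refl (fun t : ℂ => t ^ N) (𝓝 0)).smul (isBigO_const_const (1 : ℂ) hc (𝓝 0))).trans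
        (zero_right.1 h)
  refine isLittleO_irrefl ?_ (h_pow.trans_isLittleO (isLittleO_pow_pow N.lt_succ_self))
  have h_ne : ∃ᶠ t : ℂ in 𝓝[≠] 0, t ≠ 0 :=
    (eventually_mem_nhdsWithin (s := {0}ᶜ)).frequently
  exact (h_ne.filter_mono nhdsWithin_le_nhds).mono fun t ht => pow_ne_zero N ht

theorem coeff_eq_zero {m : ℕ} {c : Fin N → E}
    (h : EqMod (m + N) (fun t => ∑ i : Fin N, t ^ (m + i : ℕ) • c i) 0) : c = 0 := by
  induction N generalizing m with
  | zero => exact Subsingleton.elim _ _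
  | succ N ih =>
    have h_split (t : ℂ) : ∑ i : Fin (N + 1), t ^ (m + i : ℕ) • c i =
        t ^ m • c 0 + t ^ (m + 1) • ∑ i : Fin N, t ^ (i : ℕ) • c i.succ := by
      simp only [Fin.sum_univ_succ, Fin.val_zero, Fin.val_succ, Finset.smul_sum, smul_smul,
        add_zero]
      ring_nf
    simp only [h_split] at h
    have h0 : c 0 = 0 := eq_zero_of_pow_smul (N := m) <|
      (add_pow_smul (m + 1) _ (by fun_prop)).symm.trans (h.mono (by lia))
    have h_tail : (fun i : Fin N => c i.succ) = 0 := ih (m := m + 1) <| by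
      simpa [h0, Finset.smul_sum, smul_smul, ← pow_add, add_assoc, add_comm 1 N] using h
    funext i
    exact i.cases h0 (congrFun h_tail)

theorem coeff_eq {m : ℕ} {c c' : Fin N → E}
    (h : EqMod (m + N) (fun t => ∑ i : Fin N, t ^ (m + i : ℕ) • c i)
      fun t => ∑ i : Fin N, t ^ (m + i : ℕ) • c' i) : c = c' :=
  sub_eq_zero.1 <| coeff_eq_zero <| by
    simpa [EqMod, smul_sub, Finset.sum_sub_distrib] using h

end EqMod

end EqMod

section Expansion

variable {E E' : Type*} [NormedAddCommGroup E] [NormedSpace ℂ E]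
  [NormedAddCommGroup E'] [NormedSpace ℂ E']

theorem eqMod_taylor [CompleteSpace E] {f : ℂ → E} (hf : AnalyticAt ℂ f 0) (N : ℕ) :
    EqMod N f fun t =>
      ∑ i : Fin N, t ^ (i : ℕ) • ((i : ℕ).factorial : ℂ)⁻¹ • iteratedDeriv i f 0 := by
  obtain ⟨r, hr, hfr⟩ := hf.exists_eventuallyEq_sum_add_pow_mul N
  refine (EqMod.of_eventuallyEq (hfr.mono fun t ht => ?_)).trans
    (EqMod.add_pow_smul N _ hr.continuousAt)
  rw [ht, Finset.sum_range]
  simp only [smul_smul, div_eq_mul_inv]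

theorem eqMod_of_jet_eq {n m : ℕ} {f p : ℂ → Fin n → ℂ} (hf : AnalyticAt ℂ f 0)
    (hp : AnalyticAt ℂ p 0) (h : jet n m f = jet n m p) : EqMod (m + 1) f p := by
  have h_deriv (i : Fin (m + 1)) : iteratedDeriv i f 0 = iteratedDeriv i p 0 := congrFun h i
  refine (eqMod_taylor hf (m + 1)).trans ?_
  simpa only [h_deriv] using (eqMod_taylor hp (m + 1)).symm

theorem EqMod.exists_succ [CompleteSpace E] {N : ℕ} {f g : ℂ → E} (h : EqMod N f g)
    (hf : AnalyticAt ℂ f 0) (hg : AnalyticAt ℂ g 0) :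
    ∃ c : E, EqMod (N + 1) f fun t => g t + t ^ N • c := by
  obtain ⟨c, h_taylor⟩ : ∃ c : Fin (N + 1) → E,
      EqMod (N + 1) (f - g) fun t => ∑ i : Fin (N + 1), t ^ (i : ℕ) • c i :=
    ⟨_, eqMod_taylor (hf.sub hg) (N + 1)⟩
  simp only [Fin.sum_univ_castSucc, Fin.val_castSucc, Fin.val_last] at h_taylor
  have h_init : (fun i : Fin N => c i.castSucc) = 0 := EqMod.coeff_eq_zero (m := 0) <| by
    have h_sum := (h_taylor.mono N.le_succ).trans (EqMod.add_pow_smul N _ continuousAt_const)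
    simpa using h_sum.symm.trans (by simpa [EqMod] using h)
  refine ⟨c (Fin.last N), ?_⟩
  simpa [EqMod, sub_sub, congrFun h_init] using h_taylor

theorem EqMod.pow_add_one {h : ℂ → ℂ} {a b : ℂ} (hh : EqMod 3 h fun t => a * t + b * t ^ 2)
    (k : ℕ) :
    EqMod (k + 3) (h ^ (k + 1))
      fun t => a ^ (k + 1) * t ^ (k + 1) + (k + 1) * a ^ k * b * t ^ (k + 2) := by
  have h_ord : EqMod 1 h 0 := (hh.mono (by lia)).trans <| by
    simpa [mul_add, pow_two, mul_comm, mul_left_comm] using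
      EqMod.pow_smul 1 (q := fun t : ℂ => a + b * t) (by fun_prop)
  induction k with
  | zero => simpa using hh
  | succ k ih =>
    have main_ord : EqMod (k + 1)
        (fun t => a ^ (k + 1) * t ^ (k + 1) + (k + 1) * a ^ k * b * t ^ (k + 2)) 0 := by
      convert EqMod.pow_smul (k + 1) (q := fun t : ℂ => a ^ (k + 1) + (k + 1) * a ^ k * b * t)
        (by fun_prop) using 2
      simp only [smul_eq_mul]
      ring
    have h_mul := ih.mul hh main_ord h_ord (K := k + 4) (by lia) (by lia)
    refine .trans (pow_succ h (k + 1) ▸ h_mul) <|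
      .trans (.of_eventuallyEq (.of_forall fun t => ?_)) <|
      EqMod.add_pow_smul (k + 4) _ (q := fun _ => (k + 1) * a ^ k * b ^ 2) (by fun_prop)
    simp only [Pi.mul_apply, smul_eq_mul]
    push_cast
    ring

theorem EqMod.pow_leading {h : ℂ → ℂ} {a b : ℂ} (hh : EqMod 3 h fun t => a * t + b * t ^ 2)
    (k : ℕ) : EqMod (k + 2) (h ^ (k + 1)) fun t => a ^ (k + 1) * t ^ (k + 1) := by
  have h_trunc := EqMod.add_pow_smul (k + 2) (fun t : ℂ => a ^ (k + 1) * t ^ (k + 1))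
    (q := fun _ => (k + 1) * a ^ k * b) (by fun_prop)
  refine ((hh.pow_add_one k).mono (by lia)).trans ?_
  simpa only [smul_eq_mul, mul_comm (_ ^ (k + 2))] using h_trunc

theorem eqMod_fderiv {g : E → E'} (hg : AnalyticAt ℂ g 0) (h0 : g 0 = 0) {G : ℂ → E} {m : ℕ}
    (hm : m ≠ 0) (hG : EqMod m G 0) :
    EqMod (2 * m) (fun t => g (G t)) fun t => fderiv ℂ g 0 (G t) := by
  obtain ⟨p, hp⟩ := hg
  have h_quad : (fun x => g x - fderiv ℂ g 0 x) =O[𝓝 0] fun x => ‖x‖ ^ 2 := by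
    refine (hp.isBigO_sub_partialSum_pow 2).congr_left fun x => ?_
    rw [hp.hasFDerivAt.fderiv]
    simp only [zero_add, FormalMultilinearSeries.partialSum, Finset.sum_range_succ,
      Finset.sum_range_zero, hp.coeff_zero, h0]
    rfl
  have hG' : Tendsto G (𝓝 0) (𝓝 0) := (hG.mono (by lia)).tendsto_zero
  refine (h_quad.comp_tendsto hG').trans ?_
  simpa [Function.comp_def, ← pow_mul, mul_comm] using (EqMod.zero_right.1 hG).norm_left.pow 2

theorem EqMod.fderiv_comp {g : E → E'} (hg : AnalyticAt ℂ g 0) (h0 : g 0 = 0)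
    {G P : ℂ → E} {G' P' : ℂ → E'} {h : ℂ → ℂ} {m N : ℕ} (hm : m ≠ 0) (hN : N ≤ 2 * m)
    (hG : EqMod m G 0) (hP : EqMod N G P) (hP' : EqMod N G' P') (hh : EqMod 1 h 0)
    (hgG : (fun t => g (G t)) =ᶠ[𝓝 0] fun t => G' (h t)) :
    EqMod N (fun t => fderiv ℂ g 0 (P t)) fun t => P' (h t) :=
  (hP.symm.clm_comp _).trans <| ((eqMod_fderiv hg h0 hm hG).symm.mono hN).trans <|
    (EqMod.of_eventuallyEq hgG).trans (hP'.comp hh)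

end Expansion

/-! ### Germs of biholomorphisms and `A`-equivalence -/

section Biholo

variable {E : Type*} [NormedAddCommGroup E] [NormedSpace ℂ E]

theorem IsBiholoGerm.exists_inverse {g : E → E} (hg : IsBiholoGerm g) :
    ∃ g' : E → E, IsBiholoGerm g' ∧
      (∀ᶠ x in 𝓝 (0 : E), g' (g x) = x) ∧ ∀ᶠ x in 𝓝 (0 : E), g (g' x) = x := by
  obtain ⟨ha, h0, g', ha', h0', hl, hr⟩ := hg
  exact ⟨g', ⟨ha', h0', g, ha, h0, hr, hl⟩, hl, hr⟩

theorem IsBiholoGerm.tendsto {g : E → E} (hg : IsBiholoGerm g) : Tendsto g (𝓝 0) (𝓝 0) := by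
  simpa only [hg.2.1] using hg.1.continuousAt.tendsto

theorem IsBiholoGerm.comp {f g : E → E} (hf : IsBiholoGerm f) (hg : IsBiholoGerm g) :
    IsBiholoGerm (f ∘ g) := by
  obtain ⟨f', hf', hfl, hfr⟩ := hf.exists_inverse
  obtain ⟨g', hg', hgl, hgr⟩ := hg.exists_inverse
  refine ⟨hf.1.comp_of_eq hg.1 hg.2.1, by simp [hf.2.1, hg.2.1], g' ∘ f',
    hg'.1.comp_of_eq hf'.1 hf'.2.1, by simp [hf'.2.1, hg'.2.1], ?_, ?_⟩
  · filter_upwards [hgl, hg.tendsto.eventually hfl] with x hx hgx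
    simp [hgx, hx]
  · filter_upwards [hfr, hf'.tendsto.eventually hgr] with x hx hfx
    simp [hfx, hx]

theorem IsBiholoGerm.eqMod_one {h : ℂ → ℂ} (hh : IsBiholoGerm h) : EqMod 1 h 0 := by
  simpa [EqMod, hh.2.1] using hh.1.differentiableAt.isBigO_sub

theorem IsBiholoGerm.exists_expansion {h : ℂ → ℂ} (hh : IsBiholoGerm h) :
    ∃ a b : ℂ, a ≠ 0 ∧ EqMod 3 h fun t => a * t + b * t ^ 2 := by
  obtain ⟨a, ha⟩ := hh.eqMod_one.exists_succ hh.1 analyticAt_const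
  simp only [Pi.zero_apply, zero_add, pow_one, smul_eq_mul] at ha
  obtain ⟨b, hb⟩ := ha.exists_succ hh.1 (by fun_prop)
  refine ⟨a, b, ?_, by simpa [mul_comm] using hb⟩
  rintro rfl
  obtain ⟨h', hh', h_inv, -⟩ := hh.exists_inverse
  have h_ord : h =O[𝓝 0] fun t : ℂ => t ^ 2 := by simpa [EqMod] using ha
  have h'_ord : h' =O[𝓝 0] fun t : ℂ => t := by simpa [EqMod] using hh'.eqMod_one
  have h_id : EqMod 2 (fun t : ℂ => t ^ 1 • (1 : ℂ)) 0 :=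
    EqMod.zero_right.2 <| ((h'_ord.comp_tendsto hh.tendsto).trans h_ord).congr'
      (h_inv.mono fun t ht => by simpa using ht) .rfl
  exact one_ne_zero (EqMod.eq_zero_of_pow_smul h_id)

end Biholo

section AEquiv

variable {n k : ℕ} {F G H : Fin k → ℂ → Fin n → ℂ}

theorem AEquiv.trans (hFG : AEquiv n k F G) (hGH : AEquiv n k G H) : AEquiv n k F H := by
  obtain ⟨g, hg, a, ha, hga⟩ := hFG
  obtain ⟨g', hg', b, hb, hgb⟩ := hGH
  refine ⟨g' ∘ g, hg'.comp hg, fun i => b i ∘ a i, fun i => (hb i).comp (ha i), fun i => ?_⟩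
  filter_upwards [hga i, (ha i).tendsto.eventually (hgb i)] with t hat hbt
  simp only [Function.comp_apply, hat, hbt]

theorem AEquiv.symm (hF : ∀ i, IsCurveGerm n (F i)) (hFG : AEquiv n k F G) :
    AEquiv n k G F := by
  obtain ⟨g, hg, a, ha, hga⟩ := hFG
  obtain ⟨g', hg', hgl, -⟩ := hg.exists_inverse
  choose a' ha' _ har using fun i => (ha i).exists_inverse
  refine ⟨g', hg', a', ha', fun i => ?_⟩
  have hFi : Tendsto (F i) (𝓝 0) (𝓝 0) := by
    simpa only [(hF i).2] using (hF i).1.continuousAt.tendsto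
  filter_upwards [har i, (ha' i).tendsto.eventually (hga i),
    (ha' i).tendsto.eventually (hFi.eventually hgl)] with t ht hgt hinv
  rw [ht] at hgt
  rw [← hgt, hinv]

end AEquiv

/-! ### Lines meeting every class in a finite set -/

section Line

variable {n k : ℕ} {F V : Fin k → ℂ → Fin n → ℂ}

theorem jetF_add_smul (hF : ∀ i, AnalyticAt ℂ (F i) 0) (hV : ∀ i, AnalyticAt ℂ (V i) 0)
    (m : ℕ) (ε : ℂ) : jetF n k m (F + ε • V) = jetF n k m F + ε • jetF n k m V := by
  funext i j
  simp only [jetF, jet, Pi.add_apply, Pi.smul_apply]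
  rw [iteratedDeriv_add (hF i).contDiffAt ((hV i).const_smul (c := ε)).contDiffAt,
    iteratedDeriv_const_smul (hV i).contDiffAt]

theorem not_simple_of_finite_aEquiv_on_line (hV : ∀ i, AnalyticAt ℂ (V i) 0)
    (h_multi : ∀ ε : ℂ, IsMultigerm n k (F + ε • V))
    (h_fin : ∀ δ : ℂ, {ε : ℂ | AEquiv n k (F + ε • V) (F + δ • V)}.Finite) :
    ¬ Simple n k F := by
  rintro ⟨m, U, hU, hFU, N, R, hR⟩
  have hF : IsMultigerm n k F := by simpa using h_multi 0
  have h_jet := jetF_add_smul (fun i => (hF.1 i).1) hV m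
  have h_nhds : {ε : ℂ | jetF n k m (F + ε • V) ∈ U} ∈ 𝓝 (0 : ℂ) := by
    simp only [h_jet]
    exact (hU.preimage (by fun_prop)).mem_nhds (by simpa using hFU)
  have h_class (i : Fin N) : {ε : ℂ | AEquiv n k (F + ε • V) (R i)}.Finite := by
    refine Set.not_infinite.1 fun h_inf => ?_
    obtain ⟨δ, hδ⟩ := h_inf.nonempty
    exact h_inf ((h_fin δ).subset fun ε hε => AEquiv.trans hε (.symm (h_multi δ).1 hδ))
  refine infinite_of_mem_nhds 0 h_nhds ((Set.finite_iUnion h_class).subset fun ε hε => ?_)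
  exact Set.mem_iUnion.2 (hR _ (h_multi ε) hε)

end Line

theorem finite_setOf_add_pow_eq {R : Type*} [CommRing R] [IsDomain R] {k : ℕ} (hk : 0 < k)
    (a c : R) : {x : R | (a + x) ^ k = c}.Finite := by
  classical
  refine ((Polynomial.nthRoots k c).toFinset.finite_toSet.preimage
    (add_right_injective a).injOn).subset fun x hx => ?_
  simpa [Polynomial.mem_nthRoots hk] using hx

/-! ### The invariant `α ^ 7` -/

section Curves

variable {E E' : Type*} [NormedAddCommGroup E] [NormedSpace ℂ E]
  [NormedAddCommGroup E'] [NormedSpace ℂ E']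

/-- The cusp `(t², t³)` in the plane spanned by `x` and `y`. -/
def cusp (x y : E) (t : ℂ) : E := t ^ 2 • x + t ^ 3 • y

/-- The curve `(t⁵, t⁴ + α t⁵, t³)` in the space spanned by `x`, `y` and `z`. The terms are sorted
by their order in `t`. -/
def quint (α : ℂ) (x y z : E) (t : ℂ) : E := t ^ 3 • z + t ^ 4 • y + t ^ 5 • (x + α • y)

theorem quint_add (α ε : ℂ) (x y z : E) :
    quint (α + ε) x y z = quint α x y z + ε • fun t : ℂ => t ^ 5 • y := by
  funext t
  simp only [quint, Pi.add_apply, Pi.smul_apply]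
  module

theorem map_cusp (L : E →L[ℂ] E') (x y : E) (t : ℂ) : L (cusp x y t) = cusp (L x) (L y) t := by
  simp only [cusp, map_add, map_smul]

theorem map_quint (L : E →L[ℂ] E') (α : ℂ) (x y z : E) (t : ℂ) :
    L (quint α x y z t) = quint α (L x) (L y) (L z) t := by
  simp only [quint, map_add, map_smul]

theorem eqMod_cusp_zero (x y : E) : EqMod 2 (cusp x y) 0 := by
  convert EqMod.pow_smul 2 (q := fun t : ℂ => x + t • y) (by fun_prop) using 2 with t
  simp only [cusp]
  module

theorem eqMod_quint_zero (α : ℂ) (x y z : E) : EqMod 3 (quint α x y z) 0 := by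
  convert EqMod.pow_smul 3 (q := fun t : ℂ => z + t • y + t ^ 2 • (x + α • y)) (by fun_prop)
    using 2 with t
  simp only [quint]
  module

theorem cusp_coeff_eq {x y u v : E} {h : ℂ → ℂ} {a a' : ℂ}
    (hh : EqMod 3 h fun t => a * t + a' * t ^ 2)
    (huv : EqMod 4 (cusp u v) fun t => cusp x y (h t)) :
    u = a ^ 2 • x ∧ v = (2 * a * a') • x + a ^ 3 • y := by
  have h_exp := huv.trans <|
    ((hh.pow_add_one 1).smul_const x).add ((hh.pow_leading 2).smul_const y)
  have h_coeff : ![u, v] = ![a ^ 2 • x, (2 * a * a') • x + a ^ 3 • y] := by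
    refine EqMod.coeff_eq (m := 2) ?_
    convert h_exp using 2 with t t
    · simp [Fin.sum_univ_two, cusp]
    · simp only [Fin.sum_univ_two, Pi.add_apply, Matrix.cons_val_zero, Matrix.cons_val_one,
        Fin.val_zero, Fin.val_one]
      push_cast
      module
  exact ⟨congrFun h_coeff 0, congrFun h_coeff 1⟩

theorem quint_coeff_eq {α β : ℂ} {x y z u v w : E} {h : ℂ → ℂ} {b b' : ℂ}
    (h_an : AnalyticAt ℂ h 0) (hh : EqMod 3 h fun t => b * t + b' * t ^ 2)
    (huvw : EqMod 6 (quint α u v w) fun t => quint β x y z (h t)) :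
    v = b ^ 4 • y + (3 * b ^ 2 * b') • z ∧
      ∃ c : ℂ, u + α • v = b ^ 5 • (x + β • y) + (4 * b ^ 3 * b') • y + c • z := by
  obtain ⟨c, hc⟩ := (hh.pow_add_one 2).exists_succ (h_an.pow 3) (by fun_prop)
  have h_exp := huvw.trans <| ((hc.smul_const z).add ((hh.pow_add_one 3).smul_const y)).add
    ((hh.pow_leading 4).smul_const (x + β • y))
  have h_coeff : ![w, v, u + α • v] = ![b ^ 3 • z, b ^ 4 • y + (3 * b ^ 2 * b') • z,
      b ^ 5 • (x + β • y) + (4 * b ^ 3 * b') • y + c • z] := by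
    refine EqMod.coeff_eq (m := 3) ?_
    convert h_exp using 2 with t t
    · simp [Fin.sum_univ_three, quint]
    · simp only [Fin.sum_univ_three, Pi.add_apply, Matrix.cons_val, Fin.val_zero, Fin.val_one,
        Fin.val_two]
      push_cast
      module
  exact ⟨congrFun h_coeff 1, c, congrFun h_coeff 2⟩

theorem pow_seven_eq_one {R : Type*} [CommRing R] [IsDomain R] {a b : R} (hb : b ≠ 0)
    (h₂ : a ^ 2 = b ^ 5) (h₃ : a ^ 3 = b ^ 4) : b ^ 7 = 1 := by
  refine mul_left_cancel₀ (pow_ne_zero 8 hb) ?_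
  calc b ^ 8 * b ^ 7 = (b ^ 5) ^ 3 := by ring
    _ = (a ^ 3) ^ 2 := by rw [← h₂]; ring
    _ = b ^ 8 * 1 := by rw [h₃]; ring

theorem pow_seven_eq {α β : ℂ} {x y z u v w : E} (hxyz : LinearIndependent ℂ ![x, y, z])
    {h₁ h₂ : ℂ → ℂ} (hh₁ : IsBiholoGerm h₁) (hh₂ : IsBiholoGerm h₂)
    (h_cusp : EqMod 4 (cusp u v) fun t => cusp x y (h₁ t))
    (h_quint : EqMod 6 (quint α u v w) fun t => quint β x y z (h₂ t)) : α ^ 7 = β ^ 7 := by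
  obtain ⟨a, a', -, ha⟩ := hh₁.exists_expansion
  obtain ⟨b, b', hb0, hb⟩ := hh₂.exists_expansion
  obtain ⟨hu, hv⟩ := cusp_coeff_eq ha h_cusp
  obtain ⟨hv', c, huv⟩ := quint_coeff_eq hh₂.1 hb h_quint
  have h_coord_v := hxyz.eq_coords_of_eq (f := ![2 * a * a', a ^ 3, 0])
    (g := ![0, b ^ 4, 3 * b ^ 2 * b']) (by simpa [Fin.sum_univ_three] using hv.symm.trans hv')
  have h_coord_uv := hxyz.eq_coords_of_eq (f := ![a ^ 2, α * b ^ 4, α * (3 * b ^ 2 * b')])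
    (g := ![b ^ 5, b ^ 5 * β + 4 * b ^ 3 * b', c]) <| by
      rw [hu, hv'] at huv
      simp only [Fin.sum_univ_three, Matrix.cons_val]
      linear_combination (norm := module) huv
  have h₃ : a ^ 3 = b ^ 4 := h_coord_v 1
  have hb' : b' = 0 := by simpa [hb0] using (h_coord_v 2).symm
  have h₂ : a ^ 2 = b ^ 5 := h_coord_uv 0
  have hα : α = b * β := mul_left_cancel₀ (pow_ne_zero 4 hb0) <| by
    have h_y : α * b ^ 4 = b ^ 5 * β + 4 * b ^ 3 * b' := h_coord_uv 1
    linear_combination h_y + 4 * b ^ 3 * hb'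
  rw [hα, mul_pow, pow_seven_eq_one hb0 h₂ h₃, one_mul]

end Curves

/-! ### Isolated intersection -/

section Meet

theorem eventually_eq_zero_of_eq {ι : Type*} {f g : ℂ → ι → ℂ} {i j : ι} {p q r m : ℕ}
    (hfi : EqMod (p + 1) (fun s => f s i) fun s => s ^ p) (hfj : EqMod q (fun s => f s j) 0)
    (hgj : EqMod (r + 1) (fun t => g t j) fun t => t ^ r) (hgi : EqMod m (fun t => g t i) 0)
    (hpr : p * r < q * m) : ∀ᶠ z : ℂ × ℂ in 𝓝 0, f z.1 = g z.2 → z = 0 := by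
  set l : Filter (ℂ × ℂ) := 𝓝 0 ⊓ 𝓟 {z | f z.1 = g z.2}
  have h_fst : Tendsto Prod.fst l (𝓝 (0 : ℂ)) :=
    (continuous_fst.tendsto (0 : ℂ × ℂ)).mono_left inf_le_left
  have h_snd : Tendsto Prod.snd l (𝓝 (0 : ℂ)) :=
    (continuous_snd.tendsto (0 : ℂ × ℂ)).mono_left inf_le_left
  have h_eq : ∀ᶠ z in l, f z.1 = g z.2 := mem_inf_of_right (mem_principal_self _)
  have h_pow_fst : (fun z : ℂ × ℂ => z.1 ^ p) =O[l] fun z => z.2 ^ m :=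
    (hfi.isEquivalent_pow.isBigO_symm.comp_tendsto h_fst).trans <|
      ((EqMod.zero_right.1 hgi).comp_tendsto h_snd).congr'
        (h_eq.mono fun z hz => by simp [hz]) .rfl
  have h_pow_snd : (fun z : ℂ × ℂ => z.2 ^ r) =O[l] fun z => z.1 ^ q :=
    (hgj.isEquivalent_pow.isBigO_symm.comp_tendsto h_snd).trans <|
      ((EqMod.zero_right.1 hfj).comp_tendsto h_fst).congr'
        (h_eq.mono fun z hz => by simp [hz]) .rfl
  have h_small : (fun z : ℂ × ℂ => z.2 ^ (p * r)) =o[l] fun z => z.2 ^ (p * r) :=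
    calc (fun z : ℂ × ℂ => z.2 ^ (p * r))
      _ = fun z => (z.2 ^ r) ^ p := by simp only [← pow_mul, mul_comm]
      _ =O[l] fun z => (z.1 ^ q) ^ p := h_pow_snd.pow p
      _ = fun z => (z.1 ^ p) ^ q := by simp only [← pow_mul, mul_comm]
      _ =O[l] fun z => (z.2 ^ m) ^ q := h_pow_fst.pow q
      _ = fun z => z.2 ^ (q * m) := by simp only [← pow_mul, mul_comm]
      _ =o[l] fun z => z.2 ^ (p * r) := (isLittleO_pow_pow hpr).comp_tendsto h_snd
  have h_snd_zero : ∀ᶠ z in l, z.2 = 0 := by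
    by_contra h_freq
    rw [not_eventually] at h_freq
    exact isLittleO_irrefl (h_freq.mono fun z hz => pow_ne_zero _ hz) h_small
  refine (eventually_inf_principal (s := {z : ℂ × ℂ | f z.1 = g z.2})).1 ?_
  filter_upwards [h_snd_zero, h_pow_fst.eq_zero_imp] with z hz₂ hz₁
  have hm : m ≠ 0 := by
    rintro rfl
    lia
  exact Prod.ext (eq_zero_of_pow_eq_zero (hz₁ (by simp [hz₂, hm]))) hz₂

theorem isMultigerm_two {n : ℕ} {G : Fin 2 → ℂ → Fin n → ℂ} (hG : ∀ i, IsCurveGerm n (G i))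
    (h_meet : ∀ᶠ z : ℂ × ℂ in 𝓝 0, G 0 z.1 = G 1 z.2 → z = 0) : IsMultigerm n 2 G := by
  obtain ⟨ε, hε, h_ball⟩ := Metric.eventually_nhds_iff.1 h_meet
  have h_zero (s t : ℂ) (hs : ‖s‖ < ε) (ht : ‖t‖ < ε) (hst : G 0 s = G 1 t) : G 0 s = 0 := by
    have h_pair : (s, t) = 0 := h_ball (by simp [Prod.norm_def, hs, ht]) hst
    rw [(Prod.mk_eq_zero.1 h_pair).1, (hG 0).2]
  refine ⟨hG, ε, hε, Fin.forall_fin_two.2 ⟨Fin.forall_fin_two.2 ⟨?_, ?_⟩,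
    Fin.forall_fin_two.2 ⟨?_, ?_⟩⟩⟩
  · exact fun h => absurd rfl h
  · exact fun _ => h_zero
  · exact fun _ s t hs ht hst => hst.trans (h_zero t s ht hs hst.symm)
  · exact fun h => absurd rfl h

end Meet

/-! ### The family -/

section Family

/-- The pair of germs `G` has the `5`-jet `((t², t³, 0, …, 0), (t⁵, t⁴ + α t⁵, t³, 0, …, 0))`,
expressed as a congruence modulo `t⁶`. The ambient dimension is written as `n + 3` so that the first
three basis vectors exist. -/
def HasForm (n : ℕ) (α : ℂ) (G : Fin 2 → ℂ → Fin (n + 3) → ℂ) : Prop :=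
  EqMod 6 (G 0) (cusp (Pi.single 0 1) (Pi.single 1 1)) ∧
    EqMod 6 (G 1) (quint α (Pi.single 0 1) (Pi.single 1 1) (Pi.single 2 1))

variable {n : ℕ} {α β : ℂ} {G G' : Fin 2 → ℂ → Fin (n + 3) → ℂ}

theorem pad_cusp : (pad 2 (n + 3) fun t => ![t ^ 2, t ^ 3]) =
    cusp (Pi.single 0 1) (Pi.single 1 1) := by
  funext t ⟨j, hj⟩
  rcases j with _ | _ | j <;> simp [pad, cusp, Fin.ext_iff]

theorem pad_quint : (pad 3 (n + 3) fun t => ![t ^ 5, t ^ 4 + α * t ^ 5, t ^ 3]) =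
    quint α (Pi.single 0 1) (Pi.single 1 1) (Pi.single 2 1) := by
  have h_two : 2 % (n + 3) = 2 := Nat.mod_eq_of_lt (by lia)
  funext t ⟨j, hj⟩
  rcases j with _ | _ | _ | j <;>
    simp [pad, quint, Fin.ext_iff, Pi.single_apply, h_two, mul_comm]

theorem hasForm_of_jetF_eq (hG : ∀ i, AnalyticAt ℂ (G i) 0)
    (h_jet : jetF (n + 3) 2 5 G = jetF (n + 3) 2 5
      ![pad 2 (n + 3) fun t => ![t ^ 2, t ^ 3],
        pad 3 (n + 3) fun t => ![t ^ 5, t ^ 4 + α * t ^ 5, t ^ 3]]) : HasForm n α G := by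
  rw [pad_cusp, pad_quint] at h_jet
  exact ⟨eqMod_of_jet_eq (hG 0) (by unfold cusp; fun_prop) (congrFun h_jet 0),
    eqMod_of_jet_eq (hG 1) (by unfold quint; fun_prop) (congrFun h_jet 1)⟩

theorem HasForm.eqMod_zero (hG : HasForm n α G) : EqMod 2 (G 0) 0 ∧ EqMod 3 (G 1) 0 :=
  ⟨(hG.1.mono (by lia)).trans (eqMod_cusp_zero _ _),
    (hG.2.mono (by lia)).trans (eqMod_quint_zero _ _ _ _)⟩

theorem single_two_apply_zero : (Pi.single 2 1 : Fin (n + 3) → ℂ) 0 = 0 :=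
  Pi.single_eq_of_ne (Fin.ne_of_val_ne (show 0 ≠ 2 by decide)) _

theorem single_zero_apply_two : (Pi.single 0 1 : Fin (n + 3) → ℂ) 2 = 0 :=
  Pi.single_eq_of_ne (Fin.ne_of_val_ne (show 2 ≠ 0 by decide)) _

theorem single_one_apply_two : (Pi.single 1 1 : Fin (n + 3) → ℂ) 2 = 0 :=
  Pi.single_eq_of_ne (Fin.ne_of_val_ne (show 2 ≠ 1 by decide)) _

theorem linearIndependent_first_three :
    LinearIndependent ℂ ![(Pi.single 0 1 : Fin (n + 3) → ℂ), Pi.single 1 1, Pi.single 2 1] := by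
  have h_std := (Pi.linearIndependent_single_one (Fin (n + 3)) ℂ).comp _
    (Fin.castLE_injective (show 3 ≤ n + 3 by lia))
  convert h_std using 1
  funext i
  fin_cases i <;> rfl

theorem HasForm.pow_seven_eq (hG : HasForm n α G) (hG' : HasForm n β G')
    (h_equiv : AEquiv (n + 3) 2 G G') : α ^ 7 = β ^ 7 := by
  obtain ⟨g, hg, h, hh, hgh⟩ := h_equiv
  have h_cusp := EqMod.fderiv_comp hg.1 hg.2.1 two_ne_zero (N := 4) (by lia) hG.eqMod_zero.1
    (hG.1.mono (by lia)) (hG'.1.mono (by lia)) (hh 0).eqMod_one (hgh 0)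
  have h_quint := EqMod.fderiv_comp hg.1 hg.2.1 three_ne_zero (N := 6) (by lia) hG.eqMod_zero.2
    hG.2 hG'.2 (hh 1).eqMod_one (hgh 1)
  simp only [map_cusp, map_quint] at h_cusp h_quint
  exact CurveSing.pow_seven_eq linearIndependent_first_three (hh 0) (hh 1) h_cusp h_quint

theorem HasForm.isMultigerm (hG : HasForm n α G) (h_an : ∀ i, AnalyticAt ℂ (G i) 0) :
    IsMultigerm (n + 3) 2 G := by
  refine isMultigerm_two (Fin.forall_fin_two.2 ⟨⟨h_an 0, hG.eqMod_zero.1.apply_zero two_ne_zero⟩,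
    ⟨h_an 1, hG.eqMod_zero.2.apply_zero three_ne_zero⟩⟩) ?_
  refine eventually_eq_zero_of_eq (i := 0) (j := 2) (p := 2) (q := 6) (r := 3) (m := 5)
    ?_ ?_ ?_ ?_ (by lia)
  · simpa [cusp] using (hG.1.mono (show 3 ≤ 6 by lia)).apply 0
  · simpa [cusp, Pi.zero_def, single_zero_apply_two, single_one_apply_two] using hG.1.apply 2
  · simpa [quint, single_zero_apply_two, single_one_apply_two] using
      (hG.2.mono (show 4 ≤ 6 by lia)).apply 2
  · refine ((hG.2.mono (show 5 ≤ 6 by lia)).apply 0).trans ?_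
    simpa [quint, single_two_apply_zero] using
      EqMod.pow_smul 5 (q := fun _ => (1 : ℂ)) (by fun_prop)

/-- The pair `(0, t⁵ e₁)`: adding `ε` times it to a pair of the form `HasForm n α` changes the
parameter `α` to `α + ε`. -/
def paramDirection (n : ℕ) : Fin 2 → ℂ → Fin (n + 3) → ℂ :=
  ![0, fun t => t ^ 5 • Pi.single 1 1]

theorem analyticAt_paramDirection (i : Fin 2) : AnalyticAt ℂ (paramDirection n i) 0 := by
  fin_cases i
  · exact analyticAt_const
  · change AnalyticAt ℂ (fun t : ℂ => t ^ 5 • (Pi.single 1 1 : Fin (n + 3) → ℂ)) 0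
    fun_prop

theorem HasForm.add_smul (hG : HasForm n α G) (ε : ℂ) :
    HasForm n (α + ε) (G + ε • paramDirection n) := by
  constructor
  · simpa [paramDirection] using hG.1
  · rw [quint_add]
    exact hG.2.add (.of_eventuallyEq .rfl)

end Family

end CurveSing

open CurveSing in
/-- The family of pairs with `5`-jet `((t², t³, 0, …, 0), (t⁵, t⁴+αt⁵, t³, 0, …, 0))`
is not simple. -/
theorem not_simple_family_jet5 (d : ℕ) (hd : 3 ≤ d) (α : ℂ)
    (F : Fin 2 → ℂ → Fin d → ℂ) (hF : IsMultigerm d 2 F)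
    (hjet : jetF d 2 5 F = jetF d 2 5
      ![pad 2 d fun t => ![t ^ 2, t ^ 3],
        pad 3 d fun t => ![t ^ 5, t ^ 4 + α * t ^ 5, t ^ 3]]) :
    ¬ Simple d 2 F := by
  obtain ⟨n, rfl⟩ := Nat.exists_eq_add_of_le' hd
  have h_form : HasForm n α F := hasForm_of_jetF_eq (fun i => (hF.1 i).1) hjet
  refine not_simple_of_finite_aEquiv_on_line analyticAt_paramDirection (fun ε => ?_) fun δ => ?_
  · exact (h_form.add_smul ε).isMultigerm fun i =>
      (hF.1 i).1.add ((analyticAt_paramDirection i).const_smul (c := ε))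
  · exact (finite_setOf_add_pow_eq (by lia) α ((α + δ) ^ 7)).subset fun ε =>
      (h_form.add_smul ε).pow_seven_eq (h_form.add_smul δ)
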